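/- Let r₀ > 0 and let f be a holomorphic function on the polydisc D = {w ∈ ℂⁿ : |w_j| < r₀ for all j} with Taylor expansion f(w) = Σ_{α ∈ (ℤ_{≥0})ⁿ} b_α w^α. Then |f|² e^{−ψ} is Lebesgue integrable on some neighborhood of the origin of ℂⁿ if and only if Σ_{j=1}^n (α_j+1)/p_j > 1 holds for every multi-index α ∈ (ℤ_{≥0})ⁿ with b_α ≠ 0. -/

import Mathlib

open MeasureTheory Filter

/-- `psi p w = max_j 2 p_j log |w_j|`. -/
noncomputable def psi {n : ℕ} (p : Fin n → ℝ) (w : Fin n → ℂ) : ℝ :=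
  ⨆ j, 2 * p j * Real.log ‖w j‖

/-! Monomials decide the question. If `1 < ∑ (α_j + 1) / p_j`, bounding the maximum `ψ` below by a
suitable convex combination of its terms dominates `|w^α|² e^{-ψ}` by a product of powers
`|w_j|^{s_j}` with `s_j > -2`; otherwise the contraction `w_j ↦ e^{-1/p_j} w_j` does not decrease
the mass of `|w^α|² e^{-ψ}`, which is impossible for a finite mass on a polydisc.

By Dickson's lemma the exponents `α` with `b_α ≠ 0` have finitely many minimal elements, and near
the origin `|f|` is bounded by a combination of the corresponding `|w^α|`. Conversely `ψ` is
invariant under rotations of the coordinates, and by Bessel's inequality the average of `|f|²` over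
the torus orbit of `w` is at least `|b_α w^α|²` for every `α`.
-/

section AddHaar

variable {E : Type*} [NormedAddCommGroup E] [NormedSpace ℝ E] [FiniteDimensional ℝ E]
  [MeasurableSpace E] [BorelSpace E] {μ : Measure E} [μ.IsAddHaarMeasure]

lemma measure_diff_image_pos_of_abs_det_lt_one {T : E →L[ℝ] E} (hT : |T.det| < 1) {A : Set E}
    (hA₀ : μ A ≠ 0) (hA : μ A ≠ ⊤) : 0 < μ (A \ T '' A) := by
  have himage : μ (T '' A) < μ A := by
    rw [Measure.addHaar_image_continuousLinearMap]
    calc ENNReal.ofReal |T.det| * μ A < 1 * μ A :=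
          ENNReal.mul_lt_mul_left hA₀ hA (by simpa using hT)
      _ = μ A := one_mul _
  exact (tsub_pos_of_lt himage).trans_le le_measure_sdiff

/-- A contraction whose Jacobian is compensated by `h` would carry at least the mass of `A` into
`T '' A`, leaving none for `A \ T '' A`. -/
theorem not_integrableOn_of_le_abs_det_mul_comp {T : E →L[ℝ] E} (hT₀ : T.det ≠ 0)
    (hT : |T.det| < 1) {A : Set E} (hAm : MeasurableSet A) (hA₀ : μ A ≠ 0) (hA : μ A ≠ ⊤)
    (hTA : T '' A ⊆ A) {h : E → ℝ} (hpos : ∀ᵐ x ∂μ, 0 < h x)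
    (hle : ∀ᵐ x ∂μ, h x ≤ |T.det| * h (T x)) : ¬ IntegrableOn h A μ := by
  intro hint
  have hinj : Function.Injective T := (LinearMap.equivOfDetNeZero (T : E →ₗ[ℝ] E) hT₀).injective
  have hTAm : MeasurableSet (T '' A) :=
    (T.continuous.measurableEmbedding hinj).measurableSet_image.2 hAm
  have hderiv : ∀ x ∈ A, HasFDerivWithinAt T T A x := fun x _ => T.hasFDerivWithinAt
  have hcomp : IntegrableOn (fun x => |T.det| * h (T x)) A μ :=
    (integrableOn_image_iff_integrableOn_abs_det_fderiv_smul μ hAm hderiv hinj.injOn h).1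
      (hint.mono_set hTA)
  have hmass : ∫ x in A, h x ∂μ ≤ ∫ x in T '' A, h x ∂μ := by
    rw [integral_image_eq_integral_abs_det_fderiv_smul μ hAm hderiv hinj.injOn]
    exact integral_mono_ae hint hcomp (ae_restrict_of_ae hle)
  have hdiff : 0 < ∫ x in A \ T '' A, h x ∂μ := by
    rw [setIntegral_pos_iff_support_of_nonneg_ae
      (ae_restrict_of_ae (hpos.mono fun _ hx => hx.le)) (hint.mono_set Set.sdiff_subset)]
    refine (measure_diff_image_pos_of_abs_det_lt_one hT hA₀ hA).trans_le (measure_mono_ae ?_)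
    filter_upwards [hpos] with x hx hxA using ⟨hx.ne', hxA⟩
  rw [setIntegral_sdiff hTAm hint hTA] at hdiff
  linarith

end AddHaar

section Coordinates

variable {ι : Type*}

/-- The linear flow `w_j ↦ e^{t / p_j} w_j`, along which `psi p` increases by `2 * t`. -/
noncomputable def weightedDilation (p : ι → ℝ) (t : ℝ) : (ι → ℂ) →L[ℝ] (ι → ℂ) :=
  ContinuousLinearMap.pi fun j =>
    (Real.exp (t / p j) • ContinuousLinearMap.id ℝ ℂ) ∘SL ContinuousLinearMap.proj j

lemma norm_weightedDilation_apply (p : ι → ℝ) (t : ℝ) (w : ι → ℂ) (j : ι) :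
    ‖weightedDilation p t w j‖ = Real.exp (t / p j) * ‖w j‖ := by
  simp [weightedDilation, -Complex.ofReal_exp]

variable [Fintype ι]

lemma ae_forall_apply_ne_zero : ∀ᵐ w : ι → ℂ, ∀ j, w j ≠ 0 :=
  ae_all_iff.2 fun j => Measure.ae_eval_ne (fun _ : ι => (volume : Measure ℂ)) j 0

lemma integrableOn_ball_prod_norm_rpow {s : ι → ℝ} (hs : ∀ j, -2 < s j) {r : ℝ} (hr : 0 < r) :
    IntegrableOn (fun w : ι → ℂ => ∏ j, ‖w j‖ ^ s j) (Metric.ball 0 r) := by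
  rw [ball_pi _ hr, IntegrableOn, volume_pi, Measure.restrict_pi_pi]
  refine Integrable.fintype_prod (f := fun j (z : ℂ) => ‖z‖ ^ s j) fun j => ?_
  refine integrableOn_ball_of_norm_le_rpow (C := 1) (α := -s j) (by simp)
    (by simpa using neg_lt.1 (hs j)) (Eventually.of_forall fun z => ?_)
    (by fun_prop : Measurable fun z : ℂ => ‖z‖ ^ s j).aestronglyMeasurable
  rw [one_mul, neg_neg, Real.norm_of_nonneg (by positivity)]

lemma det_weightedDilation (p : ι → ℝ) (t : ℝ) :
    (weightedDilation p t).det = Real.exp (2 * t * ∑ j, 1 / p j) := by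
  rw [weightedDilation, ContinuousLinearMap.det_pi, Finset.mul_sum, Real.exp_sum]
  refine Finset.prod_congr rfl fun j _ => ?_
  have hdet : (Real.exp (t / p j) • ContinuousLinearMap.id ℝ ℂ).det = Real.exp (t / p j) ^ 2 := by
    simp [ContinuousLinearMap.det]
  rw [hdet, ← Real.exp_nat_mul]
  congr 1
  push_cast
  ring

lemma weightedDilation_image_ball_subset {p : ι → ℝ} (hp : ∀ j, 0 < p j) {t : ℝ} (ht : t ≤ 0)
    (r : ℝ) : weightedDilation p t '' Metric.ball 0 r ⊆ Metric.ball 0 r := by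
  rintro _ ⟨w, hw, rfl⟩
  rw [mem_ball_zero_iff] at hw ⊢
  refine lt_of_le_of_lt ((pi_norm_le_iff_of_nonneg (norm_nonneg w)).2 fun j => ?_) hw
  rw [norm_weightedDilation_apply]
  calc Real.exp (t / p j) * ‖w j‖ ≤ 1 * ‖w j‖ := by
        gcongr
        exact Real.exp_le_one_iff.2 (div_nonpos_of_nonpos_of_nonneg ht (hp j).le)
    _ ≤ ‖w‖ := by rw [one_mul]; exact norm_le_pi_norm w j

end Coordinates

section Weight

variable {n : ℕ} {p : Fin n → ℝ}

lemma measurable_psi (p : Fin n → ℝ) : Measurable (psi p) :=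
  Measurable.iSup fun j => by fun_prop

lemma psi_congr_norm (p : Fin n → ℝ) {w z : Fin n → ℂ} (h : ∀ j, ‖w j‖ = ‖z j‖) :
    psi p w = psi p z := by
  simp only [psi, h]

lemma psi_weightedDilation [Nonempty (Fin n)] (hp : ∀ j, p j ≠ 0) (t : ℝ) {w : Fin n → ℂ}
    (hw : ∀ j, w j ≠ 0) : psi p (weightedDilation p t w) = psi p w + 2 * t := by
  rw [psi, psi, ciSup_add (Set.finite_range _).bddAbove]
  refine congrArg iSup (funext fun j => ?_)
  rw [norm_weightedDilation_apply, Real.log_mul (Real.exp_ne_zero _) (norm_ne_zero_iff.2 (hw j)),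
    Real.log_exp]
  field_simp [hp j]
  ring

lemma sum_mul_log_norm_le_psi (p : Fin n → ℝ) {c : Fin n → ℝ} (hc : ∀ j, 0 ≤ c j)
    (hc₁ : ∑ j, c j = 1) (w : Fin n → ℂ) :
    ∑ j, c j * (2 * p j * Real.log ‖w j‖) ≤ psi p w :=
  calc ∑ j, c j * (2 * p j * Real.log ‖w j‖) ≤ ∑ j, c j * psi p w :=
        Finset.sum_le_sum fun j _ => mul_le_mul_of_nonneg_left
          (le_ciSup (f := fun j => 2 * p j * Real.log ‖w j‖) (Set.finite_range _).bddAbove j) (hc j)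
    _ = psi p w := by rw [← Finset.sum_mul, hc₁, one_mul]

lemma exp_neg_psi_le_prod_norm_rpow (p : Fin n → ℝ) {c : Fin n → ℝ} (hc : ∀ j, 0 ≤ c j)
    (hc₁ : ∑ j, c j = 1) {w : Fin n → ℂ} (hw : ∀ j, w j ≠ 0) :
    Real.exp (-psi p w) ≤ ∏ j, ‖w j‖ ^ (-2 * (c j * p j)) :=
  calc Real.exp (-psi p w) ≤ Real.exp (∑ j, Real.log ‖w j‖ * (-2 * (c j * p j))) := by
        refine Real.exp_le_exp.2 ((neg_le_neg (sum_mul_log_norm_le_psi p hc hc₁ w)).trans_eq ?_)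
        rw [← Finset.sum_neg_distrib]
        exact Finset.sum_congr rfl fun j _ => by ring
    _ = ∏ j, ‖w j‖ ^ (-2 * (c j * p j)) := by
        rw [Real.exp_sum]
        exact Finset.prod_congr rfl fun j _ =>
          (Real.rpow_def_of_pos (norm_pos_iff.2 (hw j)) _).symm

end Weight

section Monomial

variable {n : ℕ} {p : Fin n → ℝ} {α : Fin n → ℕ}

/-- The function `|w^α|² e^{-ψ(w)}` whose integrability near the origin decides that of
`|f|² e^{-ψ}`. -/
noncomputable def monomialDensity (p : Fin n → ℝ) (α : Fin n → ℕ) (w : Fin n → ℂ) : ℝ :=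
  ‖∏ j, w j ^ α j‖ ^ 2 * Real.exp (-psi p w)

lemma measurable_monomialDensity (p : Fin n → ℝ) (α : Fin n → ℕ) :
    Measurable (monomialDensity p α) := by
  have := measurable_psi p
  unfold monomialDensity
  fun_prop

lemma monomialDensity_nonneg (p : Fin n → ℝ) (α : Fin n → ℕ) (w : Fin n → ℂ) :
    0 ≤ monomialDensity p α w := by
  unfold monomialDensity
  positivity

lemma monomialDensity_pos (p : Fin n → ℝ) (α : Fin n → ℕ) {w : Fin n → ℂ} (hw : ∀ j, w j ≠ 0) :
    0 < monomialDensity p α w := by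
  have : 0 < ‖∏ j, w j ^ α j‖ :=
    norm_pos_iff.2 (Finset.prod_ne_zero_iff.2 fun j _ => pow_ne_zero _ (hw j))
  unfold monomialDensity
  positivity

lemma monomialDensity_le_prod_norm_rpow (p : Fin n → ℝ) (α : Fin n → ℕ) {c : Fin n → ℝ}
    (hc : ∀ j, 0 ≤ c j) (hc₁ : ∑ j, c j = 1) {w : Fin n → ℂ} (hw : ∀ j, w j ≠ 0) :
    monomialDensity p α w ≤ ∏ j, ‖w j‖ ^ (2 * (α j - c j * p j)) :=
  calc monomialDensity p α w
      ≤ (∏ j, ‖w j‖ ^ α j) ^ 2 * ∏ j, ‖w j‖ ^ (-2 * (c j * p j)) := by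
        simp only [monomialDensity, norm_prod, norm_pow]
        gcongr
        exact exp_neg_psi_le_prod_norm_rpow p hc hc₁ hw
    _ = ∏ j, ‖w j‖ ^ (2 * (α j - c j * p j)) := by
        rw [← Finset.prod_pow, ← Finset.prod_mul_distrib]
        refine Finset.prod_congr rfl fun j _ => ?_
        rw [← pow_mul, ← Real.rpow_natCast, ← Real.rpow_add (norm_pos_iff.2 (hw j))]
        congr 1
        push_cast
        ring

lemma integrableOn_ball_monomialDensity (hp : ∀ j, 0 < p j)
    (hα : 1 < ∑ j, ((α j : ℝ) + 1) / p j) {r : ℝ} (hr : 0 < r) :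
    IntegrableOn (monomialDensity p α) (Metric.ball 0 r) := by
  set S := ∑ j, ((α j : ℝ) + 1) / p j
  have hS : 0 < S := one_pos.trans hα
  -- These weights make the exponents of `monomialDensity_le_prod_norm_rpow` exceed `-2` at once.
  set c : Fin n → ℝ := fun j => ((α j : ℝ) + 1) / p j / S
  have hc : ∀ j, 0 ≤ c j := fun j => by have := hp j; positivity
  have hc₁ : ∑ j, c j = 1 := by rw [← Finset.sum_div, div_self hS.ne']
  have hexp : ∀ j, -2 < 2 * (α j - c j * p j) := fun j => by
    have hcp : c j * p j < α j + 1 := by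
      have := hp j
      calc c j * p j = (α j + 1) / S := by simp only [c]; field_simp
        _ < α j + 1 := div_lt_self (by positivity) hα
    linarith
  refine (integrableOn_ball_prod_norm_rpow hexp hr).mono'
    (measurable_monomialDensity p α).aestronglyMeasurable (ae_restrict_of_ae ?_)
  filter_upwards [ae_forall_apply_ne_zero] with w hw
  rw [Real.norm_of_nonneg (monomialDensity_nonneg p α w)]
  exact monomialDensity_le_prod_norm_rpow p α hc hc₁ hw

lemma monomialDensity_weightedDilation [Nonempty (Fin n)] (hp : ∀ j, p j ≠ 0) (α : Fin n → ℕ)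
    (t : ℝ) {w : Fin n → ℂ} (hw : ∀ j, w j ≠ 0) :
    monomialDensity p α (weightedDilation p t w) =
      Real.exp (2 * t * (∑ j, α j / p j - 1)) * monomialDensity p α w := by
  have hmonomial : ‖∏ j, weightedDilation p t w j ^ α j‖ =
      Real.exp (t * ∑ j, α j / p j) * ‖∏ j, w j ^ α j‖ := by
    simp only [norm_prod, norm_pow, norm_weightedDilation_apply, mul_pow, Finset.prod_mul_distrib,
      Finset.mul_sum, Real.exp_sum, ← Real.exp_nat_mul]
    congr! 3
    ring
  calc monomialDensity p α (weightedDilation p t w)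
      = (Real.exp (t * ∑ j, α j / p j) * ‖∏ j, w j ^ α j‖) ^ 2 * Real.exp (-(psi p w + 2 * t)) := by
        rw [monomialDensity, hmonomial, psi_weightedDilation hp t hw]
    _ = Real.exp (t * ∑ j, α j / p j) ^ 2 * Real.exp (-(2 * t)) * monomialDensity p α w := by
        rw [monomialDensity, neg_add, Real.exp_add]
        ring
    _ = Real.exp (2 * t * (∑ j, α j / p j - 1)) * monomialDensity p α w := by
        rw [← Real.exp_nat_mul, ← Real.exp_add]
        push_cast
        ring_nf

lemma not_integrableOn_ball_monomialDensity [Nonempty (Fin n)] (hp : ∀ j, 0 < p j)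
    (hα : ∑ j, ((α j : ℝ) + 1) / p j ≤ 1) {r : ℝ} (hr : 0 < r) :
    ¬ IntegrableOn (monomialDensity p α) (Metric.ball 0 r) := by
  have hdet := det_weightedDilation p (-1)
  have hinv : 0 < ∑ j, 1 / p j :=
    Finset.sum_pos (fun j _ => one_div_pos.2 (hp j)) Finset.univ_nonempty
  refine not_integrableOn_of_le_abs_det_mul_comp (T := weightedDilation p (-1))
    (hdet ▸ Real.exp_ne_zero _) ?_ measurableSet_ball (Metric.measure_ball_pos volume 0 hr).ne'
    measure_ball_lt_top.ne (weightedDilation_image_ball_subset hp (by norm_num) r)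
    (ae_forall_apply_ne_zero.mono fun _ => monomialDensity_pos p α) ?_
  · rw [hdet, Real.abs_exp, Real.exp_lt_one_iff]
    linarith
  filter_upwards [ae_forall_apply_ne_zero] with w hw
  rw [hdet, Real.abs_exp, monomialDensity_weightedDilation (fun j => (hp j).ne') α _ hw,
    ← mul_assoc, ← Real.exp_add]
  refine le_mul_of_one_le_left (monomialDensity_nonneg p α w) (Real.one_le_exp ?_)
  simp only [add_div, Finset.sum_add_distrib] at hα
  linarith

theorem integrableOn_ball_monomialDensity_iff [Nonempty (Fin n)] (hp : ∀ j, 0 < p j) {r : ℝ}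
    (hr : 0 < r) : IntegrableOn (monomialDensity p α) (Metric.ball 0 r) ↔
      1 < ∑ j, ((α j : ℝ) + 1) / p j :=
  ⟨fun hint => not_le.1 fun hα => not_integrableOn_ball_monomialDensity hp hα hr hint,
    fun hα => integrableOn_ball_monomialDensity hp hα hr⟩

end Monomial

section PowerSeries

lemma exists_finset_subset_forall_exists_le {M : Type*} [PartialOrder M] [WellQuasiOrderedLE M]
    (S : Set M) : ∃ s : Finset M, ↑s ⊆ S ∧ ∀ β ∈ S, ∃ α ∈ s, α ≤ β := by
  have hfin : {α | Minimal (· ∈ S) α}.Finite :=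
    WellQuasiOrderedLE.finite_of_isAntichain (setOfPred_minimal_antichain _)
  refine ⟨hfin.toFinset, fun α hα => (hfin.mem_toFinset.1 hα).prop, fun β hβ => ?_⟩
  obtain ⟨α, hαβ, hα⟩ := exists_minimal_le_of_wellFoundedLT (· ∈ S) β hβ
  exact ⟨α, hfin.mem_toFinset.2 hα, hαβ⟩

variable {ι : Type*} [Fintype ι] {b : (ι → ℕ) → ℂ} {r : ℝ}

lemma norm_prod_pow_le_of_le {α β : ι → ℕ} (hαβ : α ≤ β) (hr : 0 < r) {w : ι → ℂ}
    (hw : ‖w‖ ≤ r) :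
    ‖∏ j, w j ^ β j‖ ≤ (∏ j, r ^ β j) * (‖∏ j, w j ^ α j‖ / ∏ j, r ^ α j) := by
  simp only [norm_prod, norm_pow, ← Finset.prod_div_distrib, ← Finset.prod_mul_distrib]
  refine Finset.prod_le_prod (fun j _ => by positivity) fun j _ => ?_
  calc ‖w j‖ ^ β j = r ^ β j * (‖w j‖ / r) ^ β j := by rw [← mul_pow, mul_div_cancel₀ _ hr.ne']
    _ ≤ r ^ β j * (‖w j‖ / r) ^ α j := by
        gcongr ?_ * ?_
        exact pow_le_pow_of_le_one (by positivity)
          ((div_le_one hr).2 ((norm_le_pi_norm w j).trans hw)) (hαβ j)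
    _ = r ^ β j * (‖w j‖ ^ α j / r ^ α j) := by rw [div_pow]

lemma summable_norm_mul_prod_pow (hr : 0 ≤ r)
    (h : Summable fun α : ι → ℕ => b α * ∏ j, (r : ℂ) ^ α j) :
    Summable fun α : ι → ℕ => ‖b α‖ * ∏ j, r ^ α j :=
  h.norm.congr fun α => by simp [abs_of_nonneg hr]

lemma exists_finset_norm_le_sum_norm_monomial (hr : 0 < r)
    (hb : Summable fun α : ι → ℕ => ‖b α‖ * ∏ j, r ^ α j) :
    ∃ s : Finset (ι → ℕ), (∀ α ∈ s, b α ≠ 0) ∧ ∀ w : ι → ℂ, ‖w‖ ≤ r → ∀ v : ℂ,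
      HasSum (fun α : ι → ℕ => b α * ∏ j, w j ^ α j) v →
        ‖v‖ ≤ (∑' α, ‖b α‖ * ∏ j, r ^ α j) * ∑ α ∈ s, ‖∏ j, w j ^ α j‖ / ∏ j, r ^ α j := by
  obtain ⟨s, hs, hle⟩ := exists_finset_subset_forall_exists_le {α | b α ≠ 0}
  refine ⟨s, fun α hα => hs hα, fun w hw v hv => ?_⟩
  set M := ∑ α ∈ s, ‖∏ j, w j ^ α j‖ / ∏ j, r ^ α j
  have hmonomial {β : ι → ℕ} (hβ : b β ≠ 0) : ‖∏ j, w j ^ β j‖ ≤ (∏ j, r ^ β j) * M := by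
    obtain ⟨α, hα, hαβ⟩ := hle β hβ
    refine (norm_prod_pow_le_of_le hαβ hr hw).trans
      (mul_le_mul_of_nonneg_left ?_ (Finset.prod_nonneg fun j _ => by positivity))
    exact Finset.single_le_sum (f := fun α : ι → ℕ => ‖∏ j, w j ^ α j‖ / ∏ j, r ^ α j)
      (fun α _ => div_nonneg (norm_nonneg _) (Finset.prod_nonneg fun j _ => by positivity)) hα
  have hterm (β : ι → ℕ) : ‖b β * ∏ j, w j ^ β j‖ ≤ ‖b β‖ * (∏ j, r ^ β j) * M := by
    rcases eq_or_ne (b β) 0 with hβ | hβ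
    · simp [hβ]
    rw [norm_mul, mul_assoc]
    exact mul_le_mul_of_nonneg_left (hmonomial hβ) (norm_nonneg _)
  exact hv.norm_le_of_bounded (hb.hasSum.mul_right M) hterm

end PowerSeries

section Sufficiency

variable {n : ℕ} {p : Fin n → ℝ} {f : (Fin n → ℂ) → ℂ} {b : (Fin n → ℕ) → ℂ} {r : ℝ}

lemma exists_finset_density_le_sum_monomialDensity (p : Fin n → ℝ) (hr : 0 < r)
    (hb : Summable fun α : Fin n → ℕ => ‖b α‖ * ∏ j, r ^ α j) :
    ∃ (s : Finset (Fin n → ℕ)) (C : (Fin n → ℕ) → ℝ), (∀ α ∈ s, b α ≠ 0) ∧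
      ∀ w : Fin n → ℂ, ‖w‖ ≤ r → ∀ v : ℂ, HasSum (fun α => b α * ∏ j, w j ^ α j) v →
        ‖v‖ ^ 2 * Real.exp (-psi p w) ≤ ∑ α ∈ s, C α * monomialDensity p α w := by
  obtain ⟨s, hs, hle⟩ := exists_finset_norm_le_sum_norm_monomial hr hb
  set A := ∑' α, ‖b α‖ * ∏ j, r ^ α j
  refine ⟨s, fun α => A ^ 2 * s.card / (∏ j, r ^ α j) ^ 2, hs, fun w hw v hv => ?_⟩
  calc ‖v‖ ^ 2 * Real.exp (-psi p w)
      ≤ (A * ∑ α ∈ s, ‖∏ j, w j ^ α j‖ / ∏ j, r ^ α j) ^ 2 * Real.exp (-psi p w) := by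
        gcongr
        exact hle w hw v hv
    _ ≤ A ^ 2 * (s.card * ∑ α ∈ s, (‖∏ j, w j ^ α j‖ / ∏ j, r ^ α j) ^ 2) *
          Real.exp (-psi p w) := by
        rw [mul_pow]
        gcongr
        exact sq_sum_le_card_mul_sum_sq
    _ = ∑ α ∈ s, A ^ 2 * s.card / (∏ j, r ^ α j) ^ 2 * monomialDensity p α w := by
        simp only [Finset.mul_sum, Finset.sum_mul, monomialDensity]
        exact Finset.sum_congr rfl fun α _ => by ring

theorem integrableOn_ball_of_forall_integrableOn_monomialDensity (hr : 0 < r)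
    (hf : AEStronglyMeasurable f (volume.restrict (Metric.ball 0 r)))
    (hb : Summable fun α : Fin n → ℕ => ‖b α‖ * ∏ j, r ^ α j)
    (hsum : ∀ w ∈ Metric.ball 0 r, HasSum (fun α => b α * ∏ j, w j ^ α j) (f w))
    (hint : ∀ α, b α ≠ 0 → IntegrableOn (monomialDensity p α) (Metric.ball 0 r)) :
    IntegrableOn (fun w => ‖f w‖ ^ 2 * Real.exp (-psi p w)) (Metric.ball 0 r) := by
  obtain ⟨s, C, hs, hle⟩ := exists_finset_density_le_sum_monomialDensity p hr hb
  have hdom : IntegrableOn (fun w => ∑ α ∈ s, C α * monomialDensity p α w) (Metric.ball 0 r) :=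
    integrable_finsetSum _ fun α hα => (hint α (hs α hα)).const_mul (C α)
  refine hdom.mono'
    ((hf.norm.pow 2).mul (measurable_psi p).neg.exp.aestronglyMeasurable) ?_
  filter_upwards [ae_restrict_mem measurableSet_ball] with w hw
  rw [Real.norm_of_nonneg (by positivity)]
  exact hle w (mem_ball_zero_iff.1 hw).le (f w) (hsum w hw)

end Sufficiency

section Hilbert

lemma norm_coeff_le_norm_of_hasSum_orthonormal {𝕜 E σ : Type*} [RCLike 𝕜]
    [NormedAddCommGroup E] [InnerProductSpace 𝕜 E] {e : σ → E} (he : Orthonormal 𝕜 e)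
    {c : σ → 𝕜} {x : E} (hx : HasSum (fun i => c i • e i) x) (i : σ) : ‖c i‖ ≤ ‖x‖ := by
  classical
  have hinner : HasSum (fun j => if j = i then c i else 0) (inner 𝕜 (e i) x) := by
    refine (hx.mapL (innerSL 𝕜 (e i))).congr_fun fun j => ?_
    rcases eq_or_ne j i with rfl | hji
    · simp [inner_self_eq_norm_sq_to_K, he.1]
    · simp [hji, he.2 hji.symm]
  rw [(hasSum_ite_eq i (c i)).unique hinner]
  simpa [he.1 i] using norm_inner_le_norm (𝕜 := 𝕜) (e i) x

lemma sq_norm_toLp_two {𝕜 X : Type*} [RCLike 𝕜] [TopologicalSpace X] [CompactSpace X]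
    [MeasurableSpace X] [BorelSpace X] (μ : Measure X) [IsFiniteMeasure μ] (G : C(X, 𝕜)) :
    ‖ContinuousMap.toLp 2 μ 𝕜 G‖ ^ 2 = ∫ x, ‖G x‖ ^ 2 ∂μ := by
  refine RCLike.ofReal_injective (K := 𝕜) ?_
  rw [RCLike.ofReal_pow, ← inner_self_eq_norm_sq_to_K, ContinuousMap.inner_toLp, ← integral_ofReal]
  simp only [RCLike.mul_conj, RCLike.ofReal_pow]

end Hilbert

section Torus

variable {ι : Type*}

/-- The coordinatewise rotation of `ℂ^ι` by an element of the torus. -/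
noncomputable def torusRotate (θ : UnitAddTorus ι) (w : ι → ℂ) : ι → ℂ :=
  fun j => (θ j).toCircle * w j

lemma norm_torusRotate_apply (θ : UnitAddTorus ι) (w : ι → ℂ) (j : ι) :
    ‖torusRotate θ w j‖ = ‖w j‖ := by
  rw [torusRotate, norm_mul, Circle.norm_coe, one_mul]

lemma continuous_uncurry_torusRotate :
    Continuous (Function.uncurry (torusRotate (ι := ι))) := by
  unfold Function.uncurry torusRotate
  fun_prop

variable [Fintype ι]

/-- Normalized Haar measure on the torus, the one for which the characters `mFourier` are
orthonormal. -/
noncomputable abbrev torusHaar (ι : Type*) [Fintype ι] : Measure (UnitAddTorus ι) :=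
  Measure.pi fun _ => AddCircle.haarAddCircle

lemma norm_torusRotate (θ : UnitAddTorus ι) (w : ι → ℂ) : ‖torusRotate θ w‖ = ‖w‖ := by
  have hnnnorm (j : ι) : ‖torusRotate θ w j‖₊ = ‖w j‖₊ := NNReal.eq (norm_torusRotate_apply θ w j)
  simp only [Pi.norm_def, hnnnorm]

lemma prod_torusRotate_pow (θ : UnitAddTorus ι) (w : ι → ℂ) (α : ι → ℕ) :
    ∏ j, torusRotate θ w j ^ α j =
      (∏ j, w j ^ α j) * UnitAddTorus.mFourier (fun j => (α j : ℤ)) θ := by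
  simp [torusRotate, UnitAddTorus.mFourier, mul_pow, Finset.prod_mul_distrib, mul_comm,
    fourier_apply, AddCircle.toCircle_nsmul]

lemma measurePreserving_torusRotate (θ : UnitAddTorus ι) : MeasurePreserving (torusRotate θ) :=
  volume_preserving_pi fun j => (rotation (θ j).toCircle).measurePreserving

lemma integrable_integral_torusRotate {E : Type*} [NormedAddCommGroup E] [NormedSpace ℝ E]
    {F : (ι → ℂ) → E} (hF : Integrable F) :
    Integrable fun w => ∫ θ, F (torusRotate θ w) ∂torusHaar ι := by
  have hskew : MeasurePreserving (fun q : UnitAddTorus ι × (ι → ℂ) => (q.1, torusRotate q.1 q.2))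
      ((torusHaar ι).prod volume) ((torusHaar ι).prod volume) :=
    (MeasurePreserving.id _).skew_product continuous_uncurry_torusRotate.measurable
      (Eventually.of_forall fun θ => (measurePreserving_torusRotate θ).map_eq)
  exact (hskew.integrable_comp_of_integrable (hF.comp_snd _)).integral_prod_right

lemma hasSum_continuousMap_mFourier {σ : Type*} {k : σ → ι → ℤ} {c : σ → ℂ}
    {g : UnitAddTorus ι → ℂ}
    (hg : ∀ θ, HasSum (fun i => c i * UnitAddTorus.mFourier (k i) θ) (g θ)) :
    ∃ G : C(UnitAddTorus ι, ℂ), ⇑G = g ∧ HasSum (fun i => c i • UnitAddTorus.mFourier (k i)) G := by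
  have hc : Summable c := (hg 0).summable.congr fun i => by simp [UnitAddTorus.mFourier]
  have hsum : Summable fun i => c i • UnitAddTorus.mFourier (k i) := .of_norm <| by
    simpa only [norm_smul, UnitAddTorus.mFourier_norm, mul_one] using hc.norm
  refine ⟨_, funext fun θ => ?_, hsum.hasSum⟩
  exact (hsum.hasSum.mapL (ContinuousMap.evalCLM ℂ θ)).unique (hg θ)

lemma sq_norm_coeff_le_integral_sq_norm {σ : Type*} {k : σ → ι → ℤ} (hk : Function.Injective k)
    {c : σ → ℂ} {g : UnitAddTorus ι → ℂ}
    (hg : ∀ θ, HasSum (fun i => c i * UnitAddTorus.mFourier (k i) θ) (g θ)) (i : σ) :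
    ‖c i‖ ^ 2 ≤ ∫ θ, ‖g θ‖ ^ 2 ∂torusHaar ι := by
  obtain ⟨G, rfl, hG⟩ := hasSum_continuousMap_mFourier hg
  rw [← sq_norm_toLp_two]
  gcongr
  refine norm_coeff_le_norm_of_hasSum_orthonormal (UnitAddTorus.orthonormal_mFourier.comp k hk) ?_ i
  exact hG.mapL (ContinuousMap.toLp 2 (torusHaar ι) ℂ)

end Torus

section Necessity

variable {n : ℕ} {f : (Fin n → ℂ) → ℂ} {b : (Fin n → ℕ) → ℂ} {r : ℝ}

lemma sq_norm_mul_monomialDensity_le_integral_torusRotate (p : Fin n → ℝ)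
    (hsum : ∀ w ∈ Metric.ball 0 r, HasSum (fun α => b α * ∏ j, w j ^ α j) (f w))
    (α : Fin n → ℕ) {w : Fin n → ℂ} (hw : w ∈ Metric.ball 0 r) :
    ‖b α‖ ^ 2 * monomialDensity p α w ≤
      ∫ θ, ‖f (torusRotate θ w)‖ ^ 2 * Real.exp (-psi p (torusRotate θ w)) ∂torusHaar (Fin n) := by
  have hcast : Function.Injective fun (β : Fin n → ℕ) j => (β j : ℤ) :=
    Nat.cast_injective.comp_left
  have hFourier (θ : UnitAddTorus (Fin n)) :
      HasSum (fun β => b β * (∏ j, w j ^ β j) * UnitAddTorus.mFourier (fun j => (β j : ℤ)) θ)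
        (f (torusRotate θ w)) := by
    simpa only [prod_torusRotate_pow, mul_assoc] using
      hsum (torusRotate θ w) (by simpa [norm_torusRotate] using hw)
  simp only [psi_congr_norm p (norm_torusRotate_apply _ w), integral_mul_const]
  rw [monomialDensity, ← mul_assoc, ← mul_pow, ← norm_mul]
  gcongr
  exact sq_norm_coeff_le_integral_sq_norm hcast hFourier α

theorem integrableOn_ball_monomialDensity_of_integrableOn {p : Fin n → ℝ}
    (hsum : ∀ w ∈ Metric.ball 0 r, HasSum (fun α => b α * ∏ j, w j ^ α j) (f w))
    (hint : IntegrableOn (fun w => ‖f w‖ ^ 2 * Real.exp (-psi p w)) (Metric.ball 0 r))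
    {α : Fin n → ℕ} (hα : b α ≠ 0) : IntegrableOn (monomialDensity p α) (Metric.ball 0 r) := by
  have haverage :=
    integrable_integral_torusRotate ((integrable_indicator_iff measurableSet_ball).2 hint)
  have hunit : IsUnit (‖b α‖ ^ 2) := IsUnit.mk0 _ (by simpa using hα)
  refine (integrable_const_mul_iff hunit _).1 (haverage.integrableOn.mono'
    ((measurable_monomialDensity p α).const_mul _).aestronglyMeasurable ?_)
  filter_upwards [ae_restrict_mem measurableSet_ball] with w hw
  have hmem (θ : UnitAddTorus (Fin n)) : torusRotate θ w ∈ Metric.ball 0 r := by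
    simpa [norm_torusRotate] using hw
  simp only [Set.indicator_of_mem (hmem _)]
  rw [Real.norm_of_nonneg (mul_nonneg (sq_nonneg _) (monomialDensity_nonneg p α w))]
  exact sq_norm_mul_monomialDensity_le_integral_torusRotate p hsum α hw

end Necessity

theorem stmt_0 (n : ℕ) (hn : 0 < n) (p : Fin n → ℝ) (hp : ∀ j, 0 < p j)
    (r₀ : ℝ) (hr₀ : 0 < r₀) (f : (Fin n → ℂ) → ℂ) (b : (Fin n → ℕ) → ℂ)
    (hf : DifferentiableOn ℂ f {w : Fin n → ℂ | ∀ j, ‖w j‖ < r₀})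
    (hTaylor : ∀ w ∈ {w : Fin n → ℂ | ∀ j, ‖w j‖ < r₀},
      HasSum (fun α : Fin n → ℕ => b α * ∏ j, (w j) ^ (α j)) (f w)) :
    (∃ U ∈ nhds (0 : Fin n → ℂ), U ⊆ {w : Fin n → ℂ | ∀ j, ‖w j‖ < r₀} ∧
        IntegrableOn (fun w => ‖f w‖ ^ 2 * Real.exp (-psi p w)) U volume)
      ↔ ∀ α : Fin n → ℕ, b α ≠ 0 → 1 < ∑ j, ((α j : ℝ) + 1) / p j := by
  have : Nonempty (Fin n) := ⟨⟨0, hn⟩⟩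
  have hball : {w : Fin n → ℂ | ∀ j, ‖w j‖ < r₀} = Metric.ball 0 r₀ := by
    ext w
    rw [mem_ball_zero_iff, pi_norm_lt_iff hr₀, Set.mem_ofPred_eq]
  rw [hball] at hf hTaylor ⊢
  constructor
  · rintro ⟨U, hU, hUr₀, hint⟩ α hα
    obtain ⟨δ, hδ, hδU⟩ := Metric.mem_nhds_iff.1 hU
    have hsum := fun w hw => hTaylor w (hUr₀ (hδU hw))
    exact (integrableOn_ball_monomialDensity_iff hp hδ).1
      (integrableOn_ball_monomialDensity_of_integrableOn hsum (hint.mono_set hδU) hα)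
  · intro hα
    have hr : 0 < r₀ / 2 := half_pos hr₀
    have hsub : Metric.ball (0 : Fin n → ℂ) (r₀ / 2) ⊆ Metric.ball 0 r₀ :=
      Metric.ball_subset_ball (half_le_self hr₀.le)
    have hcorner : (fun _ => ((r₀ / 2 : ℝ) : ℂ)) ∈ Metric.ball (0 : Fin n → ℂ) r₀ := by
      simpa [pi_norm_lt_iff hr₀, abs_of_pos hr₀] using hr₀
    exact ⟨Metric.ball 0 (r₀ / 2), Metric.ball_mem_nhds 0 hr, hsub,
      integrableOn_ball_of_forall_integrableOn_monomialDensity hr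
        ((hf.continuousOn.mono hsub).aestronglyMeasurable measurableSet_ball)
        (summable_norm_mul_prod_pow hr.le (hTaylor _ hcorner).summable)
        (fun w hw => hTaylor w (hsub hw))
        fun α hα₀ => (integrableOn_ball_monomialDensity_iff hp hr).2 (hα α hα₀)⟩
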